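/- Let F be a polynomial in one variable with coefficients in ℕ. Then the image F(ℕ) := { F(x) : x ∈ ℕ } is small if and only if the degree of F is not equal to 1. -/

import Mathlib

open Set Filter Topology

/-- An upper quasi-density on ℕ. -/
def IsUpperQuasiDensity (μ : Set ℕ → ℝ) : Prop :=
  μ Set.univ = 1 ∧
  (∀ X : Set ℕ, μ X ≤ 1) ∧
  (∀ X Y : Set ℕ, μ (X ∪ Y) ≤ μ X + μ Y) ∧
  (∀ (X : Set ℕ) (k : ℕ), 0 < k → μ ((fun x => k * x) '' X) = μ X / k) ∧
  (∀ (X : Set ℕ) (h : ℕ), μ ((fun x => x + h) '' X) = μ X)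

/-- An upper density on ℕ: a monotone upper quasi-density. -/
def IsUpperDensity (μ : Set ℕ → ℝ) : Prop :=
  IsUpperQuasiDensity μ ∧ ∀ X Y : Set ℕ, X ⊆ Y → μ X ≤ μ Y

/-- A set of naturals is small if every upper quasi-density vanishes on it. -/
def SmallSet (X : Set ℕ) : Prop :=
  ∀ μ : Set ℕ → ℝ, IsUpperQuasiDensity μ → μ X = 0

/-- The upper asymptotic density of a set of naturals. -/
noncomputable def upperAsymptoticDensity (X : Set ℕ) : ℝ :=
  limsup (fun n : ℕ => ((X ∩ Set.Icc 1 n).ncard : ℝ) / n) atTop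

/-- The arithmetic progression k·ℕ + h. -/
def AP (k h : ℕ) : Set ℕ := {x : ℕ | ∃ m : ℕ, x = k * m + h}

/-- A finite union of arithmetic progressions of ℕ. -/
def IsFinUnionAP (A : Set ℕ) : Prop :=
  ∃ s : Finset (ℕ × ℕ), (∀ p ∈ s, 0 < p.1) ∧ A = ⋃ p ∈ s, AP p.1 p.2

/-- The upper Buck density of a set of naturals. -/
noncomputable def buckDensity (X : Set ℕ) : ℝ :=
  sInf {d : ℝ | ∃ A : Set ℕ, IsFinUnionAP A ∧ X ⊆ A ∧ d = upperAsymptoticDensity A}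

/-- `rk k X` is the number of residues h ∈ [0, k-1] with X ∩ (k·ℕ + h) ≠ ∅. -/
noncomputable def rk (k : ℕ) (X : Set ℕ) : ℕ :=
  {h : ℕ | h < k ∧ (X ∩ AP k h).Nonempty}.ncard

/-- `wk μ k S` is the number of residues h ∈ [0, k-1] with μ(S ∩ (k·ℕ + h)) ≠ 0. -/
noncomputable def wk (μ : Set ℕ → ℝ) (k : ℕ) (S : Set ℕ) : ℕ :=
  {h : ℕ | h < k ∧ μ (S ∩ AP k h) ≠ 0}.ncard

/-- number of residues mod k -/
noncomputable def rr (k : ℕ) (X : Set ℕ) : ℕ := ((fun x => x % k) '' X).ncard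

lemma rr_finite {k : ℕ} (hk : 0 < k) (X : Set ℕ) : ((fun x => x % k) '' X).Finite := by
  apply (Set.finite_Iio k).subset
  rintro _ ⟨x, _, rfl⟩
  exact Nat.mod_lt _ hk

lemma rr_le {k : ℕ} (hk : 0 < k) (X : Set ℕ) : rr k X ≤ k := by
  have : rr k X ≤ (Set.Iio k).ncard := by
    apply Set.ncard_le_ncard _ (Set.finite_Iio k)
    rintro _ ⟨x, _, rfl⟩
    exact Nat.mod_lt _ hk
  simpa [Set.ncard_eq_toFinset_card'] using this

lemma rr_univ {k : ℕ} (hk : 0 < k) : rr k Set.univ = k := by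
  have : (fun x => x % k) '' Set.univ = Set.Iio k := by
    ext y
    constructor
    · rintro ⟨x, _, rfl⟩
      exact Nat.mod_lt _ hk
    · intro hy
      exact ⟨y, trivial, Nat.mod_eq_of_lt hy⟩
  rw [rr, this]
  simp [Set.ncard_eq_toFinset_card']

lemma rr_mul_le {m n : ℕ} (hm : 0 < m) (hn : 0 < n) (X : Set ℕ) :
    rr (m * n) X ≤ rr m X * n := by
  have h1 : (fun x => x % (m * n)) '' X ⊆
      (fun q : ℕ × ℕ => q.1 + m * q.2) '' (((fun x => x % m) '' X) ×ˢ Set.Iio n) := by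
    rintro _ ⟨x, hx, rfl⟩
    exact ⟨(x % m, x / m % n), ⟨⟨x, hx, rfl⟩, Nat.mod_lt _ hn⟩, (Nat.mod_mul).symm⟩
  have hf : (((fun x => x % m) '' X) ×ˢ Set.Iio n).Finite := (rr_finite hm X).prod (Set.finite_Iio n)
  calc rr (m * n) X ≤ _ := Set.ncard_le_ncard h1 (hf.image _)
    _ ≤ (((fun x => x % m) '' X) ×ˢ Set.Iio n).ncard := Set.ncard_image_le hf
    _ = rr m X * n := by
      rw [Set.ncard_prod, rr]
      simp [Set.ncard_eq_toFinset_card' (Set.Iio n)]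

lemma rr_mul_coprime {m n : ℕ} (hm : 0 < m) (hn : 0 < n) (h : Nat.Coprime m n) (X : Set ℕ) :
    rr (m * n) X ≤ rr m X * rr n X := by
  have hf : (((fun x => x % m) '' X) ×ˢ ((fun x => x % n) '' X)).Finite :=
    (rr_finite hm X).prod (rr_finite hn X)
  rw [rr, rr, rr, ← Set.ncard_prod]
  apply Set.ncard_le_ncard_of_injOn (fun x => (x % m, x % n)) _ _ hf
  · rintro _ ⟨x, hx, rfl⟩
    refine ⟨⟨x, hx, ?_⟩, ⟨x, hx, ?_⟩⟩
    · simp [Nat.mod_mul_right_mod]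
    · simp [Nat.mod_mul_left_mod]
  · rintro _ ⟨x, hx, rfl⟩ _ ⟨y, hy, rfl⟩ hxy
    simp only [Nat.mod_mul_right_mod, Nat.mod_mul_left_mod, Prod.mk.injEq] at hxy
    exact (Nat.modEq_and_modEq_iff_modEq_mul h).1 hxy

lemma rr_shift_le {m : ℕ} (hm : 0 < m) (X : Set ℕ) (h : ℕ) :
    rr m ((fun x => x + h) '' X) ≤ rr m X := by
  have : (fun x => x % m) '' ((fun x => x + h) '' X) =
      (fun x => (x + h) % m) '' ((fun x => x % m) '' X) := by
    rw [Set.image_image, Set.image_image]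
    simp
  rw [rr, this]
  exact Set.ncard_image_le (rr_finite hm X)

lemma rr_shift {m : ℕ} (hm : 0 < m) (X : Set ℕ) (h : ℕ) :
    rr m ((fun x => x + h) '' X) = rr m X := by
  apply le_antisymm (rr_shift_le hm X h)
  have h1 := rr_shift_le hm ((fun x => x + h) '' X) ((m - 1) * h)
  refine le_trans (le_of_eq ?_) h1
  rw [rr, rr, Set.image_image, Set.image_image]
  congr 1
  apply Set.image_congr
  intro x _
  obtain ⟨j, rfl⟩ : ∃ j, m = j + 1 := ⟨m - 1, by omega⟩
  have : x + h + (j + 1 - 1) * h = x + (j + 1) * h := by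
    simp; ring
  simp only [this, Nat.add_mul_mod_self_left]

lemma rr_dil {k m : ℕ} (hk : 0 < k) (X : Set ℕ) :
    rr (k * m) ((fun x => k * x) '' X) = rr m X := by
  have : (fun x => x % (k * m)) '' ((fun x => k * x) '' X) =
      (fun x => k * x) '' ((fun x => x % m) '' X) := by
    rw [Set.image_image, Set.image_image]
    simp [Nat.mul_mod_mul_left]
  rw [rr, this, Set.ncard_image_of_injective _ (fun a b hab => Nat.eq_of_mul_eq_mul_left hk hab), rr]

lemma rr_union (m : ℕ) (X Y : Set ℕ) : rr m (X ∪ Y) ≤ rr m X + rr m Y := by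
  rw [rr, Set.image_union]
  exact Set.ncard_union_le _ _

/-- Buck-type density. -/
noncomputable def bk (X : Set ℕ) : ℝ := ⨅ k : ℕ+, (rr k X : ℝ) / (k : ℕ)

lemma bk_bdd (X : Set ℕ) : BddBelow (Set.range fun k : ℕ+ => (rr k X : ℝ) / (k : ℕ)) :=
  ⟨0, by rintro _ ⟨k, rfl⟩; positivity⟩

lemma bk_le {k : ℕ} (hk : 0 < k) (X : Set ℕ) : bk X ≤ (rr k X : ℝ) / k :=
  ciInf_le (bk_bdd X) (⟨k, hk⟩ : ℕ+)

lemma bk_qd : IsUpperQuasiDensity bk := by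
  refine ⟨?_, ?_, ?_, ?_, ?_⟩
  · have : ∀ k : ℕ+, (rr k Set.univ : ℝ) / (k : ℕ) = 1 := by
      intro k
      rw [rr_univ k.pos]
      have : ((k : ℕ) : ℝ) ≠ 0 := by exact_mod_cast k.pos.ne'
      exact div_self this
    simp only [bk, this, ciInf_const]
  · intro X
    refine (bk_le one_pos X).trans ?_
    have := rr_le one_pos X
    simpa using this
  · intro X Y
    apply le_ciInf_add_ciInf
    intro m n
    have hm := m.pos
    have hn := n.pos
    refine (bk_le (Nat.mul_pos hm hn) _).trans ?_
    have h1 := rr_union (m * n) X Y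
    have h2 := rr_mul_le hm hn X
    have h3 := rr_mul_le hn hm Y
    rw [mul_comm (n : ℕ) (m : ℕ)] at h3
    have h4 : (rr (m * n) (X ∪ Y) : ℝ) ≤ rr m X * (n : ℕ) + rr n Y * (m : ℕ) := by
      exact_mod_cast h1.trans (add_le_add h2 h3)
    have hm' : (0 : ℝ) < (m : ℕ) := by exact_mod_cast hm
    have hn' : (0 : ℝ) < (n : ℕ) := by exact_mod_cast hn
    rw [div_add_div _ _ hm'.ne' hn'.ne']
    push_cast
    gcongr
    linarith
  · intro X k hk
    have hk' : (0 : ℝ) < k := by exact_mod_cast hk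
    rw [eq_div_iff hk'.ne']
    apply le_antisymm
    · apply le_ciInf
      intro m
      have hm' : (0 : ℝ) < (m : ℕ) := by exact_mod_cast m.pos
      have h := bk_le (Nat.mul_pos hk m.pos) ((fun x => k * x) '' X)
      rw [rr_dil hk] at h
      calc _ ≤ (rr m X : ℝ) / ((k * m : ℕ) : ℝ) * k := by gcongr
        _ = _ := by push_cast; field_simp
    · rw [← div_le_iff₀ hk']
      apply le_ciInf
      intro m
      have hm' : (0 : ℝ) < (m : ℕ) := by exact_mod_cast m.pos
      rw [div_le_iff₀ hk']
      have h := bk_le m.pos X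
      rw [← rr_dil hk X] at h
      refine h.trans ?_
      have h2 := rr_mul_le m.pos hk ((fun x => k * x) '' X)
      rw [mul_comm (m : ℕ) k] at h2
      have h3 : (rr (k * m) ((fun x => k * x) '' X) : ℝ) ≤ rr m ((fun x => k * x) '' X) * k := by
        exact_mod_cast h2
      rw [div_mul_eq_mul_div]
      gcongr
  · intro X h
    simp only [bk]
    congr 1
    ext k
    rw [rr_shift k.pos]

section qd
variable {μ : Set ℕ → ℝ}

lemma qd_AP (hμ : IsUpperQuasiDensity μ) (Y : Set ℕ) {k : ℕ} (hk : 0 < k) (h : ℕ) :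
    μ ((fun x => k * x + h) '' Y) = μ Y / k := by
  rw [← hμ.2.2.2.1 Y k hk, ← hμ.2.2.2.2 ((fun x => k * x) '' Y) h, Set.image_image]

lemma not_small_of_degree_one (F : Polynomial ℕ) (hF : F.degree = 1)
    (h : SmallSet (Set.range fun x : ℕ => Polynomial.eval x F)) : False := by
  have h0 := h bk bk_qd
  have hc : F.coeff 1 ≠ 0 := by
    have h1 : F.natDegree = 1 := Polynomial.natDegree_eq_of_degree_eq_some hF
    rw [← h1]
    intro h
    rw [Polynomial.coeff_natDegree, Polynomial.leadingCoeff_eq_zero] at h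
    simp [h] at hF
  have : (Set.range fun x : ℕ => Polynomial.eval x F) =
      (fun x => F.coeff 1 * x + F.coeff 0) '' Set.univ := by
    rw [Set.image_univ]
    congr 1
    ext x
    conv_lhs => rw [Polynomial.eq_X_add_C_of_degree_le_one hF.le]
    simp
  rw [this, qd_AP bk_qd _ (Nat.pos_of_ne_zero hc), bk_qd.1] at h0
  have : (F.coeff 1 : ℝ) ≠ 0 := by exact_mod_cast hc
  simp at h0
  exact hc h0

lemma qd_nonneg (hμ : IsUpperQuasiDensity μ) (X : Set ℕ) : 0 ≤ μ X := by
  have := hμ.2.2.1 X X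
  rw [Set.union_self] at this
  linarith

lemma qd_empty (hμ : IsUpperQuasiDensity μ) : μ ∅ = 0 := by
  have := hμ.2.2.2.1 ∅ 2 two_pos
  rw [Set.image_empty] at this
  push_cast at this
  linarith

lemma qd_singleton (hμ : IsUpperQuasiDensity μ) (c : ℕ) : μ {c} = 0 := by
  have h1 := hμ.2.2.2.1 {0} 2 two_pos
  have h2 := hμ.2.2.2.2 {0} c
  rw [Set.image_singleton] at h1 h2
  simp only [mul_zero, zero_add] at h1 h2
  push_cast at h1
  linarith

lemma qd_biUnion (hμ : IsUpperQuasiDensity μ) (s : Finset ℕ) (f : ℕ → Set ℕ) :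
    μ (⋃ i ∈ s, f i) ≤ ∑ i ∈ s, μ (f i) := by
  classical
  induction s using Finset.induction_on with
  | empty => simp [qd_empty hμ]
  | insert a s ha ih =>
    rw [Finset.set_biUnion_insert, Finset.sum_insert ha]
    exact (hμ.2.2.1 _ _).trans (by gcongr)

lemma qd_le_rr (hμ : IsUpperQuasiDensity μ) (X : Set ℕ) {k : ℕ} (hk : 0 < k) :
    μ X ≤ (rr k X : ℝ) / k := by
  set T := (rr_finite hk X).toFinset with hT
  have hX : X = ⋃ h ∈ T, (fun x => k * x + h) '' {y | k * y + h ∈ X} := by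
    ext x
    simp only [Set.mem_iUnion]
    constructor
    · intro hx
      refine ⟨x % k, by simpa [hT] using ⟨x, hx, rfl⟩, x / k, ?_, Nat.div_add_mod x k⟩
      simpa [Nat.div_add_mod] using hx
    · rintro ⟨h, _, y, hy, rfl⟩
      exact hy
  calc μ X = μ (⋃ h ∈ T, (fun x => k * x + h) '' {y | k * y + h ∈ X}) := by rw [← hX]
    _ ≤ ∑ h ∈ T, μ ((fun x => k * x + h) '' {y | k * y + h ∈ X}) := qd_biUnion hμ _ _
    _ ≤ ∑ h ∈ T, (1 : ℝ) / k := by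
      apply Finset.sum_le_sum
      intro h _
      rw [qd_AP hμ _ hk]
      gcongr
      exact hμ.2.1 _
    _ = (rr k X : ℝ) / k := by
      rw [Finset.sum_const, rr, Set.ncard_eq_toFinset_card _ (rr_finite hk X), nsmul_eq_mul]
      ring
end qd

lemma sum_eval_zero (p : ℕ) [Fact p.Prime] (P : Polynomial (ZMod p)) (h : P.natDegree < p - 1) :
    ∑ a : ZMod p, P.eval a = 0 := by
  simp only [Polynomial.eval_eq_sum_range]
  rw [Finset.sum_comm]
  apply Finset.sum_eq_zero
  intro i hi
  rw [← Finset.mul_sum, FiniteField.sum_pow_lt_card_sub_one, mul_zero]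
  rw [ZMod.card]
  have := Finset.mem_range.1 hi
  omega

/-- A weak form of Wan's bound. -/
lemma wan (p : ℕ) [Fact p.Prime] (G : Polynomial (ZMod p)) (d : ℕ) (hd : 1 ≤ d)
    (hG : G.natDegree ≤ d) (hinj : ¬ Function.Injective fun a : ZMod p => G.eval a) :
    p - 1 ≤ 2 * d * (p - (Finset.univ.image fun a : ZMod p => G.eval a).card) := by
  classical
  set I := Finset.univ.image fun a : ZMod p => G.eval a with hI
  set N : ZMod p → ℕ := fun v => (Finset.univ.filter fun a : ZMod p => G.eval a = v).card with hN
  have hNI : ∀ v, N v = 0 ↔ v ∉ I := by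
    intro v
    simp [hN, hI, Finset.filter_eq_empty_iff]
  set M := Iᶜ with hM
  have hMc : M.card = p - I.card := by rw [hM, Finset.card_compl, ZMod.card]
  set D := Finset.univ.filter fun v => 2 ≤ N v with hD
  have hsumN : ∑ v, N v = p := by
    have := Finset.card_eq_sum_card_fiberwise (f := fun a : ZMod p => G.eval a)
      (s := Finset.univ) (t := Finset.univ) (by simp)
    rw [← this]
    simp [ZMod.card]
  have hDM : D.card ≤ M.card := by
    have h1 : ∑ v : ZMod p, (1 + (if v ∈ D then 1 else 0)) ≤
        ∑ v, (N v + (if v ∈ M then 1 else 0)) := by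
      apply Finset.sum_le_sum
      intro v _
      have h2 : v ∈ M ↔ N v = 0 := by rw [hNI, hM, Finset.mem_compl]
      have h3 : v ∈ D ↔ 2 ≤ N v := by simp [hD]
      simp only [h2, h3]
      split_ifs <;> omega
    rw [Finset.sum_add_distrib, Finset.sum_add_distrib, hsumN] at h1
    simp [ZMod.card] at h1
    exact h1
  obtain ⟨v0, hv0⟩ : ∃ v, v ∈ M := by
    by_contra! h
    apply hinj
    apply Finite.injective_iff_surjective.2
    intro v
    have := h v
    simp [hM, hI] at this
    exact this
  have hNv0 : N v0 = 0 := by rw [hNI]; simpa [hM] using hv0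
  set S := M ∪ D with hS
  have hv0S : v0 ∈ S := Finset.mem_union_left _ hv0
  set P : Polynomial (ZMod p) := ∏ v ∈ S.erase v0, (Polynomial.X - Polynomial.C v) with hP
  have hPd : P.natDegree = S.card - 1 := by
    rw [hP, Polynomial.natDegree_finsetProd_X_sub_C_eq_card, Finset.card_erase_of_mem hv0S]
  have hSc : S.card ≤ 2 * M.card := (Finset.card_union_le _ _).trans (by omega)
  rw [← hMc]
  by_contra! hlt
  have hkey : d * (S.card - 1) < p - 1 := by
    refine lt_of_le_of_lt ?_ hlt
    calc d * (S.card - 1) ≤ d * (2 * M.card) := Nat.mul_le_mul_left _ (by omega)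
      _ = 2 * d * M.card := by ring
  have hA : ∑ v : ZMod p, P.eval v = 0 := by
    apply sum_eval_zero
    rw [hPd]
    exact lt_of_le_of_lt (Nat.le_mul_of_pos_left _ hd) hkey
  have hB : ∑ a : ZMod p, P.eval (G.eval a) = 0 := by
    have := sum_eval_zero p (P.comp G) (by
      rw [Polynomial.natDegree_comp, hPd, mul_comm]
      exact lt_of_le_of_lt (Nat.mul_le_mul_right _ hG) hkey)
    simpa [Polynomial.eval_comp] using this
  have hC : ∑ a : ZMod p, P.eval (G.eval a) = ∑ v : ZMod p, (N v : ZMod p) * P.eval v := by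
    rw [← Finset.sum_fiberwise (s := Finset.univ) (g := fun a : ZMod p => G.eval a)]
    apply Finset.sum_congr rfl
    intro v _
    rw [Finset.sum_congr rfl (g := fun _ => P.eval v)]
    · rw [Finset.sum_const, nsmul_eq_mul]
    · intro a ha
      rw [(Finset.mem_filter.1 ha).2]
  have hE : ∑ v : ZMod p, ((N v : ZMod p) - 1) * P.eval v = 0 := by
    simp only [sub_mul, one_mul, Finset.sum_sub_distrib]
    rw [← hC, hB, hA, sub_zero]
  rw [Finset.sum_eq_single v0] at hE
  · rw [hNv0] at hE
    simp only [Nat.cast_zero, zero_sub, neg_mul, one_mul, neg_eq_zero, hP, Polynomial.eval_prod,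
      Finset.prod_eq_zero_iff] at hE
    obtain ⟨v, hv, hv'⟩ := hE
    simp only [Polynomial.eval_sub, Polynomial.eval_X, Polynomial.eval_C, sub_eq_zero] at hv'
    exact (Finset.mem_erase.1 hv).1 hv'.symm
  · intro v _ hv
    by_cases hvS : v ∈ S
    · have : P.eval v = 0 := by
        rw [hP, Polynomial.eval_prod]
        exact Finset.prod_eq_zero (Finset.mem_erase.2 ⟨hv, hvS⟩) (by simp)
      rw [this, mul_zero]
    · have h1 : N v = 1 := by
        simp only [hS, hM, hD, Finset.mem_union, Finset.mem_compl, Finset.mem_filter,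
          Finset.mem_univ, true_and, not_or] at hvS
        have := hNI v
        have h3 : N v ≠ 0 := fun h => hvS.1 (this.1 h)
        omega
      rw [h1]
      simp
  · simp

lemma convex_lt (F : Polynomial ℕ) (hF : 2 ≤ F.natDegree) (x : ℕ) (hx : 1 ≤ x) :
    F.eval x + F.eval 1 < F.eval (x + 1) + F.eval 0 := by
  simp only [Polynomial.eval_eq_sum_range, ← Finset.sum_add_distrib, ← mul_add]
  have key : ∀ i, x ^ i + 1 ^ i ≤ (x + 1) ^ i + 0 ^ i := by
    intro i
    rcases Nat.eq_zero_or_pos i with rfl | hi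
    · simp
    · rw [zero_pow hi.ne']
      exact pow_add_pow_le (by omega) (by omega) hi.ne'
  apply Finset.sum_lt_sum
  · intro i _
    exact Nat.mul_le_mul_left _ (key i)
  · refine ⟨F.natDegree, by simp, ?_⟩
    have hc : 0 < F.coeff F.natDegree := by
      apply Nat.pos_of_ne_zero
      rw [Polynomial.coeff_natDegree, Ne, Polynomial.leadingCoeff_eq_zero]
      rintro rfl
      simp at hF
    apply Nat.mul_lt_mul_of_pos_left _ hc
    obtain ⟨e, he⟩ : ∃ e, F.natDegree = e + 2 := ⟨F.natDegree - 2, by omega⟩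
    rw [he]
    have h1 : x ^ (e + 1) + 1 ≤ (x + 1) ^ (e + 1) := by
      have := key (e + 1)
      simpa using this
    have h2 : 1 ≤ x ^ (e + 1) := Nat.one_le_pow _ _ hx
    have : (x + 1) ^ (e + 2) = (x + 1) ^ (e + 1) * x + (x + 1) ^ (e + 1) := by ring
    have h3 : x ^ (e + 2) = x ^ (e + 1) * x := by ring
    simp only [one_pow, ne_eq, Nat.add_eq_zero_iff, OfNat.ofNat_ne_zero, and_false,
      not_false_eq_true, zero_pow, add_zero]
    rw [this, h3]
    have h4 : x ^ (e + 1) * x ≤ (x + 1) ^ (e + 1) * x := Nat.mul_le_mul_right _ (by omega)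
    omega

lemma exists_prime (F : Polynomial ℕ) (hF : 2 ≤ F.natDegree) (n : ℕ) :
    ∃ p, p.Prime ∧ n < p ∧ ∃ x : ℕ, (p : ℤ) ∣ ((F.eval (x + 1) : ℕ) : ℤ) - ((F.eval x : ℕ) : ℤ) := by
  set Q : Polynomial ℤ := F.map (Nat.castRingHom ℤ) with hQ
  have hQe : ∀ x : ℕ, ((F.eval x : ℕ) : ℤ) = Q.eval (x : ℤ) := by
    intro x
    have := Polynomial.eval_natCast_map (Nat.castRingHom ℤ) F x
    simpa [hQ] using this.symm
  have hg : F.eval 0 < F.eval 1 := by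
    have hc : 0 < F.coeff F.natDegree := by
      apply Nat.pos_of_ne_zero
      rw [Polynomial.coeff_natDegree, Ne, Polynomial.leadingCoeff_eq_zero]
      rintro rfl
      simp at hF
    simp only [Polynomial.eval_eq_sum_range]
    apply Finset.sum_lt_sum
    · intro i _
      apply Nat.mul_le_mul_left
      rw [one_pow]
      exact pow_le_one₀ le_rfl zero_le_one
    · refine ⟨F.natDegree, by simp, ?_⟩
      rw [zero_pow (by omega)]
      simpa using hc
  obtain ⟨g, hg'⟩ : ∃ g, F.eval 1 = F.eval 0 + g := ⟨F.eval 1 - F.eval 0, by omega⟩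
  have hgpos : 0 < g := by omega
  set m := g * n.factorial with hm
  have hmpos : 0 < m := Nat.mul_pos hgpos n.factorial_pos
  have hconv := convex_lt F hF m hmpos
  have d1 : (m : ℤ) ∣ ((F.eval (m + 1) : ℕ) : ℤ) - ((F.eval 1 : ℕ) : ℤ) := by
    have := Polynomial.sub_dvd_eval_sub ((m + 1 : ℕ) : ℤ) ((1 : ℕ) : ℤ) Q
    rw [← hQe, ← hQe] at this
    simpa using this
  have d2 : (m : ℤ) ∣ ((F.eval m : ℕ) : ℤ) - ((F.eval 0 : ℕ) : ℤ) := by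
    have := Polynomial.sub_dvd_eval_sub ((m : ℕ) : ℤ) ((0 : ℕ) : ℤ) Q
    rw [← hQe, ← hQe] at this
    simpa using this
  obtain ⟨s, hs⟩ := dvd_sub d1 d2
  have hs' : ((F.eval (m + 1) : ℕ) : ℤ) - ((F.eval m : ℕ) : ℤ) = g * (n.factorial * s + 1) := by
    have e1 : ((F.eval 1 : ℕ) : ℤ) = F.eval 0 + g := by exact_mod_cast hg'
    have e2 : (m : ℤ) = g * n.factorial := by rw [hm]; push_cast; rfl
    rw [e2] at hs
    linear_combination hs + e1
  have hspos : 0 < s := by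
    have : (0 : ℤ) < m * s := by
      rw [← hs]
      have : ((F.eval m : ℕ) : ℤ) + F.eval 1 < ((F.eval (m + 1) : ℕ) : ℤ) + ((F.eval 0 : ℕ) : ℤ) := by exact_mod_cast hconv
      linarith
    exact pos_of_mul_pos_right this (by positivity)
  obtain ⟨t, rfl⟩ := Int.eq_ofNat_of_zero_le hspos.le
  have htpos : 0 < t := by exact_mod_cast hspos
  have hne : n.factorial * t + 1 ≠ 1 := by
    have := Nat.mul_pos n.factorial_pos htpos
    omega
  obtain ⟨p, hp, hpd⟩ := Nat.exists_prime_and_dvd hne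
  refine ⟨p, hp, ?_, m, ?_⟩
  · by_contra! hle
    have h1 : p ∣ n.factorial * t := ((hp.dvd_factorial).2 hle).mul_right _
    have h2 : p ∣ 1 := (Nat.dvd_add_right h1).1 hpd
    exact hp.one_lt.ne' (Nat.dvd_one.1 h2)
  · rw [hs']
    apply Dvd.dvd.mul_left
    exact_mod_cast hpd

lemma rr_poly_prime (F : Polynomial ℕ) (hF : 2 ≤ F.natDegree) (n : ℕ) :
    ∃ p, p.Prime ∧ n < p ∧ (rr p (Set.range fun x : ℕ => Polynomial.eval x F) : ℝ) ≤
      (1 - 1 / (4 * F.natDegree)) * p := by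
  classical
  obtain ⟨p, hp, hnp, x, hx⟩ := exists_prime F hF n
  refine ⟨p, hp, hnp, ?_⟩
  haveI : Fact p.Prime := ⟨hp⟩
  set G : Polynomial (ZMod p) := F.map (Nat.castRingHom (ZMod p)) with hG
  have hGe : ∀ x : ℕ, ((F.eval x : ℕ) : ZMod p) = G.eval (x : ZMod p) := by
    intro x
    have := Polynomial.eval_natCast_map (Nat.castRingHom (ZMod p)) F x
    simpa [hG] using this.symm
  have hw := wan p G F.natDegree (by omega) Polynomial.natDegree_map_le (by
    intro hinj
    have h1 : G.eval ((x + 1 : ℕ) : ZMod p) = G.eval (x : ZMod p) := by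
      rw [← hGe, ← hGe]
      have := (ZMod.intCast_zmod_eq_zero_iff_dvd _ p).2 hx
      push_cast at this
      exact sub_eq_zero.1 this
    have h2 := hinj h1
    simp at h2)
  set I := Finset.univ.image fun a : ZMod p => G.eval a with hI
  have hr : rr p (Set.range fun x : ℕ => Polynomial.eval x F) ≤ I.card := by
    rw [rr, ← Set.ncard_coe_finset]
    apply Set.ncard_le_ncard_of_injOn (fun x : ℕ => (x : ZMod p)) _ _ I.finite_toSet
    · rintro _ ⟨_, ⟨y, rfl⟩, rfl⟩
      simp only [ZMod.natCast_mod, hGe]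
      simp [hI]
    · rintro _ ⟨y, _, rfl⟩ _ ⟨z, _, rfl⟩ h
      simp only [ZMod.natCast_mod] at h
      exact (ZMod.natCast_eq_natCast_iff' _ _ _).1 h
  have hIp : I.card ≤ p := by
    have := Finset.card_le_univ I
    rwa [ZMod.card] at this
  have hd : (0 : ℝ) < F.natDegree := by exact_mod_cast (by omega : 0 < F.natDegree)
  have hw' : (p : ℝ) - 1 ≤ 2 * F.natDegree * (p - I.card) := by
    have h3 : ((p - 1 : ℕ) : ℝ) ≤ ((2 * F.natDegree * (p - I.card) : ℕ) : ℝ) := by exact_mod_cast hw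
    rw [Nat.cast_mul, Nat.cast_sub hIp, Nat.cast_sub hp.one_le] at h3
    push_cast at h3
    exact h3
  have hp2 : (2 : ℝ) ≤ p := by exact_mod_cast hp.two_le
  have hr' : (rr p (Set.range fun x : ℕ => Polynomial.eval x F) : ℝ) ≤ I.card := by exact_mod_cast hr
  refine hr'.trans ?_
  rw [sub_mul, one_mul, le_sub_comm, div_mul_eq_mul_div, one_mul, div_le_iff₀ (by positivity)]
  nlinarith

lemma rr_poly_pow (F : Polynomial ℕ) (hF : 2 ≤ F.natDegree) (j : ℕ) :
    ∃ k, 0 < k ∧ (rr k (Set.range fun x : ℕ => Polynomial.eval x F) : ℝ) ≤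
      (1 - 1 / (4 * F.natDegree)) ^ j * k := by
  induction j with
  | zero =>
    refine ⟨1, one_pos, ?_⟩
    have := rr_le one_pos (Set.range fun x : ℕ => Polynomial.eval x F)
    simpa using this
  | succ j ih =>
    obtain ⟨k, hk, hk'⟩ := ih
    obtain ⟨p, hp, hkp, hp'⟩ := rr_poly_prime F hF k
    refine ⟨k * p, Nat.mul_pos hk hp.pos, ?_⟩
    have hco : Nat.Coprime k p :=
      (Nat.coprime_of_lt_prime hk.ne' hkp hp).symm
    have h := rr_mul_coprime hk hp.pos hco (Set.range fun x : ℕ => Polynomial.eval x F)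
    have h' : (rr (k * p) (Set.range fun x : ℕ => Polynomial.eval x F) : ℝ) ≤
      rr k (Set.range fun x : ℕ => Polynomial.eval x F) *
      rr p (Set.range fun x : ℕ => Polynomial.eval x F) := by exact_mod_cast h
    refine h'.trans ((mul_le_mul hk' hp' (by positivity) ((Nat.cast_nonneg _).trans hk')).trans ?_)
    push_cast
    apply le_of_eq
    ring

lemma qd_poly {μ : Set ℕ → ℝ} (hμ : IsUpperQuasiDensity μ) (F : Polynomial ℕ)
    (hF : 2 ≤ F.natDegree) : μ (Set.range fun x : ℕ => Polynomial.eval x F) = 0 := by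
  apply le_antisymm _ (qd_nonneg hμ _)
  have hd : (2 : ℝ) ≤ F.natDegree := by exact_mod_cast hF
  have hinv : 1 / (4 * (F.natDegree : ℝ)) ≤ 1 := by
    rw [div_le_one (by positivity)]
    linarith
  have hpos : 0 < 1 / (4 * (F.natDegree : ℝ)) := by positivity
  have ht := tendsto_pow_atTop_nhds_zero_of_lt_one (r := 1 - 1 / (4 * (F.natDegree : ℝ)))
    (by linarith) (by linarith)
  apply ge_of_tendsto' ht
  intro j
  obtain ⟨k, hk, hk'⟩ := rr_poly_pow F hF j
  refine (qd_le_rr hμ _ hk).trans ?_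
  rw [div_le_iff₀ (by exact_mod_cast hk)]
  exact hk'

/-- For a polynomial F with coefficients in ℕ, the image F(ℕ) is small if and
only if the degree of F is not equal to 1. -/
theorem smallSet_polynomial_image_iff (F : Polynomial ℕ) :
    SmallSet (Set.range fun x : ℕ => Polynomial.eval x F) ↔ F.degree ≠ 1 := by
  constructor
  · intro h hdeg
    exact not_small_of_degree_one F hdeg h
  · intro hdeg μ hμ
    have hn : F.natDegree ≠ 1 := by
      intro h
      exact hdeg ((Polynomial.degree_eq_iff_natDegree_eq_of_pos one_pos).2 h)
    rcases Nat.lt_or_ge F.natDegree 2 with h2 | h2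
    · have h0 : F.natDegree = 0 := by omega
      rw [Polynomial.eq_C_of_natDegree_eq_zero h0]
      have : (Set.range fun x : ℕ => Polynomial.eval x (Polynomial.C (F.coeff 0))) = {F.coeff 0} := by
        simp
      rw [this]
      exact qd_singleton hμ _
    · exact qd_poly hμ F h2
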